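/- arXiv:2402.16710 — 3 statements merged into one kernel-verified Lean document; each statement's English description precedes it below -/
import Mathlib

section
/- Let K ≥ 2, let μ : {1,…,K} → ℝ satisfy μ₁ > μ₂ ≥ ⋯ ≥ μ_K, and let c : {1,…,K} → ℝ with c_a > 0 for all a. Set Δ_a = μ₁ − μ_a, x_a(y) = 2y/(Δ_a² − 2y), m_a(y) = (μ₁ + x_a(y)μ_a)/(1 + x_a(y)), F(y) = Σ_{a=2}^K (c_a/c₁)·(μ₁ − m_a(y))²/(μ_a − m_a(y))², and let y* ∈ (0, Δ₂²/2) be the unique solution of F(y*) = 1. Define S = c₁ + Σ_{a=2}^K c_a x_a(y*), w₁* = c₁/S, and w_a* = c_a x_a(y*)/S for a ≥ 2. Then w* ∈ Σ_K and w* maximizes over Σ_K the function w ↦ min_{a≠1} ( w₁·w_a/(c_a·w₁ + c₁·w_a) )·Δ_a²/2 (with the convention that a term equals 0 when its denominator vanishes). (Gaussian specialization of Theorem 10: the optimal cost proportions w*(μ,c) achieving T*(μ)⁻¹ are given in closed form through y*.) -/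
/-!
In the normalized variables `p = w₁ / c₁` and `q = w_a / c_a`, the rate of arm `a` is
`p q / (p + q) · Δ_a² / 2`, and for every `r` one has `p q / (p + q) · (1 + r)² ≤ r² p + q`, with
equality when `q = r p`. Take `r = x_a(y)`, so that `Δ_a² / 2 = y (1 + x_a) / x_a`: at `w*` all
arms then have the same rate `y / S`. For an arbitrary `w`, average the inequalities with weights
proportional to `c_a x_a (1 + x_a)`. The equation `F(y) = 1` says `∑ c_a x_a² = c₁`, so these
weights add up to `S` while the right-hand sides add up to `y (w₁ + ∑ w_a) = y`; hence the minimal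
rate is at most `y / S`.
-/

open Finset

section RealInequality

theorem mul_div_mul_add_mul_eq_mul_div_add {c d : ℝ} (hc : c ≠ 0) (hd : d ≠ 0) (u v : ℝ) :
    u * v / (d * u + c * v) = u / c * (v / d) / (u / c + v / d) := by
  rw [div_add_div _ _ hc hd, div_mul_div_comm, div_div_div_cancel_right₀ (mul_ne_zero hc hd),
    mul_comm u d]

theorem mul_div_add_mul_one_add_sq_le {p q : ℝ} (hp : 0 ≤ p) (hq : 0 ≤ q) (r : ℝ) :
    p * q / (p + q) * (1 + r) ^ 2 ≤ r ^ 2 * p + q := by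
  rw [div_mul_eq_mul_div]
  refine div_le_of_le_mul₀ (add_nonneg hp hq) (by positivity) ?_
  linarith [sq_nonneg (r * p - q)]

end RealInequality

section PooledMean

/-- The mean of two arms with means `u` and `v` observed with weights `1` and `r`; the paper's
`m_a(y)` is `pooledMean μ₁ μ_a (x_a(y))`. -/
noncomputable def pooledMean (u v r : ℝ) : ℝ := (u + r * v) / (1 + r)

theorem sub_pooledMean_left {u v r : ℝ} (hr : 1 + r ≠ 0) :
    u - pooledMean u v r = r * ((u - v) / (1 + r)) := by
  unfold pooledMean
  field_simp
  ring

theorem sub_pooledMean_right {u v r : ℝ} (hr : 1 + r ≠ 0) :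
    v - pooledMean u v r = -((u - v) / (1 + r)) := by
  unfold pooledMean
  field_simp
  ring

theorem sub_pooledMean_sq_div_sub_pooledMean_sq {u v r : ℝ} (huv : u ≠ v) (hr : 1 + r ≠ 0) :
    (u - pooledMean u v r) ^ 2 / (v - pooledMean u v r) ^ 2 = r ^ 2 := by
  have hne : ((u - v) / (1 + r)) ^ 2 ≠ 0 := pow_ne_zero 2 (div_ne_zero (sub_ne_zero.2 huv) hr)
  rw [sub_pooledMean_left hr, sub_pooledMean_right hr, neg_sq, mul_pow,
    mul_div_cancel_right₀ _ hne]

end PooledMean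

section GaussianArms

variable {ι : Type*} {μ c w z : ι → ℝ} {b a : ι} {y : ℝ}

section AllocationRatio

/-- The ratio `x_a(y) = 2y / (Δ_a² - 2y)` of the cost-normalized allocations of arm `a` and of the
reference arm `b`. -/
noncomputable def allocationRatio (μ : ι → ℝ) (b : ι) (y : ℝ) (a : ι) : ℝ :=
  2 * y / ((μ b - μ a) ^ 2 - 2 * y)

theorem allocationRatio_pos (hy : 0 < y) (hgap : 2 * y < (μ b - μ a) ^ 2) :
    0 < allocationRatio μ b y a :=
  div_pos (by positivity) (sub_pos.2 hgap)

theorem allocationRatio_mul_sq_gap (hgap : 2 * y < (μ b - μ a) ^ 2) :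
    allocationRatio μ b y a * (μ b - μ a) ^ 2 = 2 * y * (1 + allocationRatio μ b y a) := by
  have hne : (μ b - μ a) ^ 2 - 2 * y ≠ 0 := (sub_pos.2 hgap).ne'
  unfold allocationRatio
  field_simp
  ring

end AllocationRatio

section Rate

/-- The rate at which proportions `w` separate arm `a` from the reference arm `b`. As `x / 0 = 0`,
it vanishes when its denominator does. -/
noncomputable def pairRate (μ c : ι → ℝ) (b : ι) (w : ι → ℝ) (a : ι) : ℝ :=
  w b * w a / (c a * w b + c b * w a) * (μ b - μ a) ^ 2 / 2

theorem pairRate_mul_le (hc : ∀ i, 0 < c i) (hw : ∀ i, 0 ≤ w i) (hy : 0 ≤ y)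
    (hgap : 2 * y < (μ b - μ a) ^ 2) :
    pairRate μ c b w a *
        (c a * allocationRatio μ b y a + c a * allocationRatio μ b y a ^ 2) ≤
      y * (c a * allocationRatio μ b y a ^ 2 * (w b / c b) + w a) := by
  have hratio := allocationRatio_mul_sq_gap hgap
  set r := allocationRatio μ b y a
  set p := w b / c b
  set q := w a / c a
  have hp : 0 ≤ p := div_nonneg (hw b) (hc b).le
  have hq : 0 ≤ q := div_nonneg (hw a) (hc a).le
  calc pairRate μ c b w a * (c a * r + c a * r ^ 2)
      = p * q / (p + q) / 2 * c a * (1 + r) * (r * (μ b - μ a) ^ 2) := by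
        rw [pairRate, mul_div_mul_add_mul_eq_mul_div_add (hc b).ne' (hc a).ne']
        ring
    _ = y * c a * (p * q / (p + q) * (1 + r) ^ 2) := by
        rw [hratio]
        ring
    _ ≤ y * c a * (r ^ 2 * p + q) :=
        mul_le_mul_of_nonneg_left (mul_div_add_mul_one_add_sq_le hp hq r)
          (mul_nonneg hy (hc a).le)
    _ = y * (c a * r ^ 2 * p + w a) := by
        rw [← mul_div_cancel₀ (w a) (hc a).ne']
        ring

/-- The objective `min_{a ≠ b} pairRate μ c b w a`, whose supremum over the simplex is
`T*(μ)⁻¹`. -/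
noncomputable def characteristicRate (μ c : ι → ℝ) (b : ι) (w : ι → ℝ) : ℝ :=
  ⨅ a : {a // a ≠ b}, pairRate μ c b w a

theorem characteristicRate_eq_sInf (μ c : ι → ℝ) (b : ι) (w : ι → ℝ) :
    characteristicRate μ c b w =
      sInf {v : ℝ | ∃ a, a ≠ b ∧
        v = if c a * w b + c b * w a = 0 then 0
            else (w b * w a / (c a * w b + c b * w a)) * (μ b - μ a) ^ 2 / 2} := by
  rw [characteristicRate, iInf]
  congr 1
  ext v
  have hite (a : ι) : (if c a * w b + c b * w a = 0 then 0
      else w b * w a / (c a * w b + c b * w a) * (μ b - μ a) ^ 2 / 2) = pairRate μ c b w a := by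
    split_ifs with hden
    · rw [pairRate, hden, div_zero, zero_mul, zero_div]
    · rfl
  simp only [hite, Set.mem_range, Set.mem_ofPred_eq, Subtype.exists, exists_prop, eq_comm]

theorem characteristicRate_le_pairRate [Finite ι] (ha : a ≠ b) :
    characteristicRate μ c b w ≤ pairRate μ c b w a :=
  ciInf_le (Set.finite_range _).bddBelow (⟨a, ha⟩ : {a // a ≠ b})

end Rate

variable [Fintype ι] [DecidableEq ι]

section RatioProportions

/-- The normalizing constant `S = c_b + ∑_{a ≠ b} c_a z_a` of `ratioProportions`. -/
noncomputable def ratioTotal (c : ι → ℝ) (b : ι) (z : ι → ℝ) : ℝ :=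
  c b + ∑ a ∈ univ.erase b, c a * z a

/-- The proportions whose cost-normalized allocations `w_a / c_a` are in ratio `z a` to that of
the reference arm `b`; the paper's `w*` is the case `z = allocationRatio μ b y*`. -/
noncomputable def ratioProportions (c : ι → ℝ) (b : ι) (z : ι → ℝ) (a : ι) : ℝ :=
  if a = b then c b / ratioTotal c b z else c a * z a / ratioTotal c b z

theorem ratioTotal_pos (hc : ∀ i, 0 < c i) (hz : ∀ i ≠ b, 0 ≤ z i) : 0 < ratioTotal c b z :=
  add_pos_of_pos_of_nonneg (hc b) <|
    sum_nonneg fun i hi => mul_nonneg (hc i).le (hz i (ne_of_mem_erase hi))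

theorem ratioProportions_self (c : ι → ℝ) (b : ι) (z : ι → ℝ) :
    ratioProportions c b z b = c b / ratioTotal c b z :=
  if_pos rfl

theorem ratioProportions_of_ne (c z : ι → ℝ) (ha : a ≠ b) :
    ratioProportions c b z a = c a * z a / ratioTotal c b z :=
  if_neg ha

theorem sum_ratioProportions (hS : ratioTotal c b z ≠ 0) : ∑ a, ratioProportions c b z a = 1 := by
  rw [← add_sum_erase _ _ (mem_univ b), ratioProportions_self,
    sum_congr rfl fun a ha => ratioProportions_of_ne c z (ne_of_mem_erase ha),
    ← sum_div, ← add_div, ← ratioTotal, div_self hS]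

theorem ratioProportions_mem_stdSimplex (hc : ∀ i, 0 < c i) (hz : ∀ i ≠ b, 0 ≤ z i) :
    ratioProportions c b z ∈ stdSimplex ℝ ι := by
  have hS := ratioTotal_pos hc hz
  refine ⟨fun a => ?_, sum_ratioProportions hS.ne'⟩
  obtain rfl | ha := eq_or_ne a b
  · rw [ratioProportions_self]
    exact (div_pos (hc a) hS).le
  · rw [ratioProportions_of_ne c z ha]
    exact div_nonneg (mul_nonneg (hc a).le (hz a ha)) hS.le

theorem pairRate_ratioProportions (hc : ∀ i, 0 < c i) (hS : ratioTotal c b z ≠ 0) (ha : a ≠ b) :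
    pairRate μ c b (ratioProportions c b z) a =
      z a * (μ b - μ a) ^ 2 / (2 * (1 + z a)) / ratioTotal c b z := by
  have hcb := (hc b).ne'
  have hca := (hc a).ne'
  rw [pairRate, mul_div_mul_add_mul_eq_mul_div_add hcb hca, ratioProportions_self,
    ratioProportions_of_ne c z ha]
  field_simp

end RatioProportions

section Optimality

/-- The function `F(y) = ∑_{a ≠ b} (c_a / c_b) (μ_b - m_a(y))² / (μ_a - m_a(y))²`, whose equation
`F(y) = 1` determines `y*`. -/
noncomputable def balanceSum (μ c : ι → ℝ) (b : ι) (y : ℝ) : ℝ :=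
  ∑ a ∈ univ.erase b,
    c a / c b * (μ b - pooledMean (μ b) (μ a) (allocationRatio μ b y a)) ^ 2 /
      (μ a - pooledMean (μ b) (μ a) (allocationRatio μ b y a)) ^ 2

theorem balanceSum_eq_sum_mul_sq_div (hy : 0 < y) (hgap : ∀ i ≠ b, 2 * y < (μ b - μ i) ^ 2) :
    balanceSum μ c b y = (∑ a ∈ univ.erase b, c a * allocationRatio μ b y a ^ 2) / c b := by
  rw [balanceSum, sum_div]
  refine sum_congr rfl fun a ha => ?_
  have hgap_a := hgap a (ne_of_mem_erase ha)
  have hne : μ b ≠ μ a := fun h => by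
    rw [h, sub_self] at hgap_a
    linarith
  have hr : 1 + allocationRatio μ b y a ≠ 0 := by
    linarith [allocationRatio_pos hy hgap_a]
  rw [mul_div_assoc, sub_pooledMean_sq_div_sub_pooledMean_sq hne hr, div_mul_eq_mul_div]

theorem nonempty_ne_of_balanceSum_eq_one (hF : balanceSum μ c b y = 1) :
    Nonempty {a // a ≠ b} := by
  obtain ⟨a, ha, -⟩ := exists_ne_zero_of_sum_ne_zero (hF.trans_ne one_ne_zero)
  exact ⟨a, ne_of_mem_erase ha⟩

theorem characteristicRate_ratioProportions_allocationRatio [Nonempty {a // a ≠ b}]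
    (hc : ∀ i, 0 < c i) (hy : 0 < y) (hgap : ∀ i ≠ b, 2 * y < (μ b - μ i) ^ 2) :
    characteristicRate μ c b (ratioProportions c b (allocationRatio μ b y)) =
      y / ratioTotal c b (allocationRatio μ b y) := by
  have hS := ratioTotal_pos hc fun i hi => (allocationRatio_pos hy (hgap i hi)).le
  have hrate (a : {a // a ≠ b}) :
      pairRate μ c b (ratioProportions c b (allocationRatio μ b y)) a =
        y / ratioTotal c b (allocationRatio μ b y) := by
    have hr := allocationRatio_pos hy (hgap a a.2)
    rw [pairRate_ratioProportions hc hS.ne' a.2, allocationRatio_mul_sq_gap (hgap a a.2),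
      mul_right_comm, mul_div_cancel_left₀ _ (by positivity)]
  rw [characteristicRate, iInf_congr hrate, ciInf_const]

theorem characteristicRate_le_div_ratioTotal (hc : ∀ i, 0 < c i) (hy : 0 < y)
    (hgap : ∀ i ≠ b, 2 * y < (μ b - μ i) ^ 2) (hF : balanceSum μ c b y = 1)
    (hw : w ∈ stdSimplex ℝ ι) :
    characteristicRate μ c b w ≤ y / ratioTotal c b (allocationRatio μ b y) := by
  have hS := ratioTotal_pos hc fun i hi => (allocationRatio_pos hy (hgap i hi)).le
  have hbalance : ∑ a ∈ univ.erase b, c a * allocationRatio μ b y a ^ 2 = c b := by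
    rwa [balanceSum_eq_sum_mul_sq_div hy hgap, div_eq_one_iff_eq (hc b).ne'] at hF
  rw [le_div_iff₀ hS]
  set r := allocationRatio μ b y
  calc characteristicRate μ c b w * ratioTotal c b r
      = ∑ a ∈ univ.erase b, characteristicRate μ c b w * (c a * r a + c a * r a ^ 2) := by
        rw [← mul_sum, sum_add_distrib, hbalance, ratioTotal, add_comm (c b)]
    _ ≤ ∑ a ∈ univ.erase b, y * (c a * r a ^ 2 * (w b / c b) + w a) := by
        refine sum_le_sum fun a ha => ?_
        have hab := ne_of_mem_erase ha
        have hr : 0 < r a := allocationRatio_pos hy (hgap a hab)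
        have hca := hc a
        exact (mul_le_mul_of_nonneg_right (characteristicRate_le_pairRate hab)
          (by positivity)).trans (pairRate_mul_le hc hw.1 hy.le (hgap a hab))
    _ = y * ∑ a, w a := by
        rw [← mul_sum, sum_add_distrib, ← sum_mul, hbalance, mul_div_cancel₀ _ (hc b).ne',
          add_sum_erase _ _ (mem_univ b)]
    _ = y := by rw [hw.2, mul_one]

end Optimality

end GaussianArms

theorem optimal_proportions_closed_form_general {ι : Type*} [Fintype ι] [DecidableEq ι]
    {μ c : ι → ℝ} {b : ι} {y : ℝ} (hc : ∀ i, 0 < c i) (hy : 0 < y)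
    (hgap : ∀ i ≠ b, 2 * y < (μ b - μ i) ^ 2) (hF : balanceSum μ c b y = 1) :
    ratioProportions c b (allocationRatio μ b y) ∈ stdSimplex ℝ ι ∧
      IsMaxOn (characteristicRate μ c b) (stdSimplex ℝ ι)
        (ratioProportions c b (allocationRatio μ b y)) := by
  have := nonempty_ne_of_balanceSum_eq_one hF
  refine ⟨ratioProportions_mem_stdSimplex hc fun i hi => (allocationRatio_pos hy (hgap i hi)).le,
    isMaxOn_iff.2 fun w hw => ?_⟩
  rw [characteristicRate_ratioProportions_allocationRatio hc hy hgap]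
  exact characteristicRate_le_div_ratioTotal hc hy hgap hF hw

theorem sq_gap_one_le_sq_gap {K : ℕ} [NeZero K] {μ : Fin K → ℝ} (h10 : μ 1 ≤ μ 0)
    (hmono : ∀ a b : Fin K, 1 ≤ a → a ≤ b → μ b ≤ μ a) {a : Fin K} (ha : a ≠ 0) :
    (μ 0 - μ 1) ^ 2 ≤ (μ 0 - μ a) ^ 2 := by
  have hle : μ a ≤ μ 1 := hmono 1 a le_rfl (Fin.one_le_of_ne_zero ha)
  exact pow_le_pow_left₀ (sub_nonneg.2 h10) (sub_le_sub_left hle _) 2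

/-- Gaussian specialization of Theorem 10. Arm `0` plays the
role of arm 1 (the best arm) and arm `1` the role of arm 2. Given the
unique root `y*` of `F(y*) = 1`, the proportions
`w₁* = c₀/S`, `w_a* = c_a x_a(y*)/S` with `S = c₀ + Σ_{a≠0} c_a x_a(y*)`
lie in the simplex and maximize
`w ↦ min_{a≠0} (w₀ w_a/(c_a w₀ + c₀ w_a))·Δ_a²/2` over the simplex
(with the convention that a term is `0` when its denominator vanishes). -/
theorem optimal_proportions_closed_form
    (K : ℕ) [NeZero K] (hK : 2 ≤ K)
    (μ c : Fin K → ℝ)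
    (hc : ∀ a, 0 < c a)
    (h12 : μ 1 < μ 0)
    (hmono : ∀ a b : Fin K, 1 ≤ a → a ≤ b → μ b ≤ μ a)
    (ystar : ℝ) :
    let Δ : Fin K → ℝ := fun a => μ 0 - μ a
    let x : Fin K → ℝ → ℝ := fun a y => 2 * y / ((Δ a) ^ 2 - 2 * y)
    let m : Fin K → ℝ → ℝ := fun a y => (μ 0 + x a y * μ a) / (1 + x a y)
    let F : ℝ → ℝ := fun y =>
      ∑ a ∈ Finset.univ.erase 0, (c a / c 0) * (μ 0 - m a y) ^ 2 / (μ a - m a y) ^ 2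
    let S : ℝ := c 0 + ∑ a ∈ Finset.univ.erase 0, c a * x a ystar
    let wstar : Fin K → ℝ := fun a => if a = 0 then c 0 / S else c a * x a ystar / S
    let obj : (Fin K → ℝ) → ℝ := fun w =>
      sInf {v : ℝ | ∃ a, a ≠ 0 ∧
        v = if c a * w 0 + c 0 * w a = 0 then 0
            else (w 0 * w a / (c a * w 0 + c 0 * w a)) * (Δ a) ^ 2 / 2}
    ystar ∈ Set.Ioo 0 ((Δ 1) ^ 2 / 2) → F ystar = 1 →
      (∀ a, 0 ≤ wstar a) ∧ (∑ a, wstar a) = 1 ∧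
      ∀ w : Fin K → ℝ, (∀ a, 0 ≤ w a) → (∑ a, w a) = 1 → obj w ≤ obj wstar := by
  intro Δ x m F S wstar obj ⟨hy, hy1⟩ hF
  have hgap (a : Fin K) (ha : a ≠ 0) : 2 * ystar < (μ 0 - μ a) ^ 2 :=
    ((lt_div_iff₀' two_pos).1 hy1).trans_le (sq_gap_one_le_sq_gap h12.le hmono ha)
  obtain ⟨hmem, hmax⟩ := optimal_proportions_closed_form_general hc hy hgap hF
  refine ⟨hmem.1, hmem.2, fun w hw hsum => ?_⟩
  have hle := isMaxOn_iff.1 hmax w ⟨hw, hsum⟩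
  rwa [characteristicRate_eq_sInf, characteristicRate_eq_sInf] at hle
end

section
/- Let K ≥ 2 and let c₁,…,c_K > 0. For each a ∈ {2,…,K} let g_a : [0,∞) → ℝ be a continuous, strictly increasing function with g_a(0) = 0. Suppose x* = (x₂*,…,x_K*) ∈ [0,∞)^{K−1} is a maximizer over [0,∞)^{K−1} of the function Φ(x) = ( min_{a≠1} g_a(x_a) ) / ( c₁ + c₂x₂ + ⋯ + c_Kx_K ). Then g_a(x_a*) = g_b(x_b*) for all a, b ∈ {2,…,K}. (Lemma 9: at the optimum of the reparameterized sup-inf problem, all the functions g_a are equalized.) -/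
/-!
The maximal ratio of gain to cost is positive, hence so is the minimal gain `m` at a maximizer `x`.
If some coordinate had `g a (x a) > m ≥ g a 0`, the intermediate value theorem would provide a
smaller value `y ∈ [0, x a)` of that coordinate with `g a y = m`. Moving to `y` does not lower the
minimal gain but strictly lowers the cost, so it would increase the ratio.
-/

section GainCostRatio

open Set Function

variable {ι : Type*} {s : Set ι} {g : ι → ℝ → ℝ} {x : ι → ℝ} {a : ι}

/-- The minimal gain `min_{a ∈ s} g_a(x_a)` of the allocation `x` over the arms in `s`, encoded as
an infimum of reals; it is `0` when `s` is empty or the gains are not bounded below. -/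
noncomputable def minGain (s : Set ι) (g : ι → ℝ → ℝ) (x : ι → ℝ) : ℝ :=
  sInf {v : ℝ | ∃ a ∈ s, v = g a (x a)}

/-- The total cost `c₀ + ∑_{a ∈ t} c_a x_a` of the allocation `x`: each unit allocated to an arm
`a ∈ t` costs `c a`, on top of a fixed cost `c₀`. -/
def affineCost (t : Finset ι) (c₀ : ℝ) (c : ι → ℝ) (x : ι → ℝ) : ℝ :=
  c₀ + ∑ a ∈ t, c a * x a

theorem minGain_pos_of_finite (hs : s.Finite) (hne : s.Nonempty)
    (hpos : ∀ a ∈ s, 0 < g a (x a)) : 0 < minGain s g x := by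
  have himage : {v : ℝ | ∃ a ∈ s, v = g a (x a)} = (fun a => g a (x a)) '' s := by
    simp only [image, eq_comm]
  rw [minGain, himage, (hs.image _).lt_csInf_iff (hne.image _)]
  exact forall_mem_image.2 hpos

theorem minGain_one_pos_of_strictMonoOn (hs : s.Finite) (hne : s.Nonempty)
    (hmono : ∀ a ∈ s, StrictMonoOn (g a) (Ici 0)) (hzero : ∀ a ∈ s, g a 0 = 0) :
    0 < minGain s g 1 :=
  minGain_pos_of_finite hs hne fun a ha => (hzero a ha).symm.trans_lt
    (hmono a ha self_mem_Ici (mem_Ici.2 zero_le_one) zero_lt_one)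

theorem minGain_le_of_minGain_pos (hpos : 0 < minGain s g x) (ha : a ∈ s) :
    minGain s g x ≤ g a (x a) := by
  have hbdd : BddBelow {v : ℝ | ∃ a ∈ s, v = g a (x a)} := by
    by_contra hunbdd
    exact hpos.ne' (Real.sInf_of_not_bddBelow hunbdd)
  exact csInf_le hbdd ⟨a, ha, rfl⟩

theorem affineCost_pos {t : Finset ι} {c₀ : ℝ} {c : ι → ℝ} (hc₀ : 0 < c₀)
    (hc : ∀ a ∈ t, 0 ≤ c a) (hx : ∀ a ∈ t, 0 ≤ x a) : 0 < affineCost t c₀ c x :=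
  add_pos_of_pos_of_nonneg hc₀ (Finset.sum_nonneg fun a ha => mul_nonneg (hc a ha) (hx a ha))

variable [DecidableEq ι]

theorem minGain_le_minGain_update (hpos : 0 < minGain s g x) (ha : a ∈ s) {y : ℝ}
    (hy : minGain s g x ≤ g a y) : minGain s g x ≤ minGain s g (update x a y) := by
  refine le_csInf ⟨_, a, ha, rfl⟩ ?_
  rintro _ ⟨b, hb, rfl⟩
  obtain rfl | hba := eq_or_ne b a
  · rwa [update_self]
  · rw [update_of_ne hba]
    exact minGain_le_of_minGain_pos hpos hb

theorem affineCost_update {t : Finset ι} (ha : a ∈ t) (c₀ : ℝ) (c x : ι → ℝ) (y : ℝ) :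
    affineCost t c₀ c (update x a y) = affineCost (t.erase a) c₀ c x + c a * y := by
  have hrest : ∑ b ∈ t.erase a, c b * update x a y b = ∑ b ∈ t.erase a, c b * x b :=
    Finset.sum_congr rfl fun b hb => by rw [update_of_ne (Finset.ne_of_mem_erase hb)]
  rw [affineCost, affineCost, ← Finset.sum_erase_add t _ ha, hrest, update_self, add_assoc]

theorem strictMono_affineCost_update {t : Finset ι} (ha : a ∈ t) {c : ι → ℝ} (hca : 0 < c a)
    (c₀ : ℝ) (x : ι → ℝ) : StrictMono fun y => affineCost t c₀ c (update x a y) := by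
  simp only [affineCost_update ha]
  exact (strictMono_mul_left_of_pos hca).const_add _

variable {C : (ι → ℝ) → ℝ}

theorem exists_div_lt_div_of_minGain_lt
    (hC_pos : ∀ x ∈ s.pi fun _ => Ici 0, 0 < C x)
    (hC_mono : ∀ x ∈ s.pi fun _ => Ici 0, ∀ a ∈ s,
      StrictMonoOn (fun y => C (update x a y)) (Ici 0))
    (hx : x ∈ s.pi fun _ => Ici 0) (hpos : 0 < minGain s g x) (ha : a ∈ s)
    (hg_cont : ContinuousOn (g a) (Ici 0)) (hg_zero : g a 0 ≤ 0)
    (hlt : minGain s g x < g a (x a)) :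
    ∃ z ∈ s.pi fun _ => Ici 0, minGain s g x / C x < minGain s g z / C z := by
  obtain ⟨y, ⟨hy_nonneg, hy_lt⟩, hgy⟩ : minGain s g x ∈ g a '' Ico 0 (x a) :=
    intermediate_value_Ico (hx a ha) (hg_cont.mono Icc_subset_Ici_self)
      ⟨hg_zero.trans hpos.le, hlt⟩
  have hz : update x a y ∈ s.pi fun _ => Ici 0 :=
    (update_mem_pi_iff_of_mem hx).2 fun _ => hy_nonneg
  have hgain : minGain s g x ≤ minGain s g (update x a y) :=
    minGain_le_minGain_update hpos ha hgy.ge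
  have hcost : C (update x a y) < C x := by
    simpa only [update_eq_self] using hC_mono x hx a ha hy_nonneg (hx a ha) hy_lt
  exact ⟨update x a y, hz, div_lt_div₀' hgain hcost (hpos.trans_le hgain) (hC_pos _ hz)⟩

theorem equalization_at_optimum_general
    (hC_pos : ∀ x ∈ s.pi fun _ => Ici 0, 0 < C x)
    (hC_mono : ∀ x ∈ s.pi fun _ => Ici 0, ∀ a ∈ s,
      StrictMonoOn (fun y => C (update x a y)) (Ici 0))
    (hg_cont : ∀ a ∈ s, ContinuousOn (g a) (Ici 0)) (hg_zero : ∀ a ∈ s, g a 0 ≤ 0)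
    (hg_pos : ∃ z ∈ s.pi fun _ => Ici 0, 0 < minGain s g z)
    (hx : x ∈ s.pi fun _ => Ici 0)
    (hmax : IsMaxOn (fun z => minGain s g z / C z) (s.pi fun _ => Ici 0) x) :
    ∀ a ∈ s, ∀ b ∈ s, g a (x a) = g b (x b) := by
  have hpos : 0 < minGain s g x := by
    obtain ⟨z, hz, hz_pos⟩ := hg_pos
    have hratio : 0 < minGain s g x / C x := (div_pos hz_pos (hC_pos z hz)).trans_le (hmax hz)
    exact (div_pos_iff_of_pos_right (hC_pos x hx)).1 hratio
  have hgain : ∀ a ∈ s, g a (x a) = minGain s g x := by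
    intro a ha
    refine ((minGain_le_of_minGain_pos hpos ha).eq_of_not_lt fun hlt => ?_).symm
    obtain ⟨z, hz, hz_lt⟩ := exists_div_lt_div_of_minGain_lt hC_pos hC_mono hx hpos ha
      (hg_cont a ha) (hg_zero a ha) hlt
    exact hz_lt.not_ge (hmax hz)
  exact fun a ha b hb => (hgain a ha).trans (hgain b hb).symm

end GainCostRatio

/-- Lemma 9: at a maximizer of the reparameterized sup-inf
problem `Φ(x) = (min_{a≠0} g_a(x_a)) / (c₀ + Σ_{a≠0} c_a x_a)` over the
nonnegative orthant, all the functions `g_a` are equalized. Arm `0` plays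
the role of arm 1; each `g_a` (for `a ≠ 0`) is continuous and strictly
increasing on `[0,∞)` with `g_a(0) = 0`. -/
theorem equalization_at_optimum
    (K : ℕ) [NeZero K] (hK : 2 ≤ K)
    (c : Fin K → ℝ) (hc : ∀ a, 0 < c a)
    (g : Fin K → ℝ → ℝ)
    (hg_cont : ∀ a, a ≠ 0 → ContinuousOn (g a) (Set.Ici 0))
    (hg_mono : ∀ a, a ≠ 0 → StrictMonoOn (g a) (Set.Ici 0))
    (hg_zero : ∀ a, a ≠ 0 → g a 0 = 0)
    (Φ : (Fin K → ℝ) → ℝ)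
    (hΦ : Φ = fun x =>
      sInf {v : ℝ | ∃ a, a ≠ 0 ∧ v = g a (x a)} /
        (c 0 + ∑ a ∈ Finset.univ.erase 0, c a * x a))
    (xstar : Fin K → ℝ)
    (hxstar_nonneg : ∀ a, a ≠ 0 → 0 ≤ xstar a)
    (hmax : ∀ x : Fin K → ℝ, (∀ a, a ≠ 0 → 0 ≤ x a) → Φ x ≤ Φ xstar) :
    ∀ a b : Fin K, a ≠ 0 → b ≠ 0 → g a (xstar a) = g b (xstar b) := by
  subst hΦ
  exact fun a b ha hb => equalization_at_optimum_general (s := {0}ᶜ)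
    (C := affineCost (Finset.univ.erase 0) (c 0) c)
    (fun x hx => affineCost_pos (hc 0) (fun a _ => (hc a).le) fun a ha =>
      hx a (Finset.ne_of_mem_erase ha))
    (fun x _ a ha => (strictMono_affineCost_update
      (Finset.mem_erase_of_ne_of_mem ha (Finset.mem_univ a)) (hc a) (c 0) x).strictMonoOn _)
    hg_cont (fun a ha => (hg_zero a ha).le)
    ⟨1, fun _ _ => Set.mem_Ici.2 zero_le_one,
      minGain_one_pos_of_strictMonoOn (Set.toFinite _) ⟨a, ha⟩ hg_mono hg_zero⟩
    hxstar_nonneg hmax a ha b hb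
end

section
/- Let K ≥ 2, ℓ ∈ (0,1], and ε > 0. Consider a sequence of arm pulls (a_t)_{t≥1} with a_t ∈ {1,…,K} and per-round costs C_t ∈ [ℓ,1]; let N_a(t) = Σ_{s≤t}1{a_s=a}, ĉ_a(t) = (1/N_a(t))·Σ_{s≤t}C_s·1{a_s=a} (each arm pulled once in the first K rounds), and J(t) = Σ_{s≤t}C_s = Σ_a ĉ_a(t)N_a(t). Let (ŵ*(t))_{t≥K} be a sequence in the simplex Σ_K and w* ∈ Σ_K. Assume that for every t ≥ K, a_{t+1} satisfies either N_{a_{t+1}}(t) ≤ √t or a_{t+1} ∈ argmax_a ( J(t)·ŵ*_a(t) − ĉ_a(t)·N_a(t) ), and that there exists t₀ such that max_a |ŵ*_a(t) − w*_a| < ε for all t ≥ t₀. Then there exists t_ε ≥ t₀ such that for all t ≥ t_ε, max_a | ĉ_a(t)·N_a(t)/J(t) − w*_a | ≤ 3(K−1)ε. (Lemma 16: the largest-deficit-first tracking rule keeps the empirical cost proportions within 3(K−1)ε of w* once the plug-in proportions are within ε.) -/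
/-!
The cost spent on an arm grows only in rounds where that arm is pulled. Deficits sum to zero, so an
arm of largest deficit has spent at most `J(t) ŵ_b(t) ≤ (w_b + ε) J(t)`; an arm pulled by forced
exploration has spent `o(J(t))`, which is eventually at most `ε J(t)`. Hence the spending on arm `b`
is eventually at most `(w_b + ε) J(t) + 1`, and since `J(t) → ∞`, its share of the total exceeds
`w_b` by at most any fixed `η > ε`. The deviations of the shares from `w` sum to zero, so this
one-sided bound yields the two-sided bound `(K - 1) η`.
-/

section

open Filter Finset Asymptotics

theorem eventually_le_of_succ_le_max {α : Type*} [LinearOrder α] {u v : ℕ → α}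
    (hv : Monotone v) (hv_top : Tendsto v atTop atTop)
    (hu : ∀ᶠ t in atTop, u (t + 1) ≤ max (u t) (v t)) : ∀ᶠ t in atTop, u t ≤ v t := by
  obtain ⟨T, hT⟩ := eventually_atTop.1 hu
  have u_le_max : ∀ t ≥ T, u t ≤ max (u T) (v t) := by
    intro t ht
    induction t, ht using Nat.le_induction with
    | base => exact le_max_left _ _
    | succ t ht ih =>
      calc u (t + 1) ≤ max (u t) (v t) := hT t ht
        _ ≤ max (u T) (v t) := max_le ih (le_max_right _ _)
        _ ≤ max (u T) (v (t + 1)) := max_le_max_left _ (hv t.le_succ)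
  filter_upwards [eventually_ge_atTop T, hv_top.eventually_ge_atTop (u T)] with t ht huv
  exact (u_le_max t ht).trans (max_le huv le_rfl)

theorem isLittleO_sqrt_id_atTop : Real.sqrt =o[atTop] (id : ℝ → ℝ) := by
  refine isLittleO_of_tendsto (fun x hx ↦ by rw [show x = 0 from hx, Real.sqrt_zero]) ?_
  simp only [id_eq, Real.sqrt_div_self]
  exact tendsto_inv_atTop_zero.comp Real.tendsto_sqrt_atTop

section FiniteSums

variable {ι R : Type*} [Fintype ι] [CommRing R] [LinearOrder R] [IsStrictOrderedRing R] {x : ι → R}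

theorem nonneg_of_forall_le_of_sum_eq_zero {b : ι} (hx : ∀ i, x i ≤ x b) (hsum : ∑ i, x i = 0) :
    0 ≤ x b := by
  by_contra! hneg
  exact (sum_neg (fun i _ ↦ (hx i).trans_lt hneg) ⟨b, mem_univ b⟩).ne hsum

theorem abs_le_card_sub_one_mul_of_sum_eq_zero {η : R} (hη : 0 ≤ η) (hx : ∀ i, x i ≤ η)
    (hsum : ∑ i, x i = 0) (b : ι) : |x b| ≤ (Fintype.card ι - 1) * η := by
  classical
  have sum_others_le : ∑ i ∈ univ.erase b, x i ≤ (Fintype.card ι - 1) * η := by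
    have := sum_le_card_nsmul (univ.erase b) x η fun i _ ↦ hx i
    rwa [card_erase_of_mem (mem_univ b), card_univ, nsmul_eq_mul,
      Nat.cast_pred (Fintype.card_pos_iff.2 ⟨b⟩)] at this
  have add_sum_others : x b + ∑ i ∈ univ.erase b, x i = 0 := by
    rw [add_sum_erase _ _ (mem_univ b), hsum]
  refine abs_le.2 ⟨by linarith, ?_⟩
  cases subsingleton_or_nontrivial ι
  · have hzero : x b = 0 := by rw [← Fintype.sum_subsingleton x b, hsum]
    have hcard : Fintype.card ι = 1 := Fintype.card_eq_one_iff.2 ⟨b, fun i ↦ Subsingleton.elim i b⟩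
    simp [hzero, hcard]
  · have hcard : (2 : R) ≤ Fintype.card ι := mod_cast Fintype.one_lt_card (α := ι)
    calc x b ≤ 1 * η := by linarith [hx b]
      _ ≤ (Fintype.card ι - 1) * η := by gcongr; linarith

end FiniteSums

/-- The total cost `J(t)` of rounds `1, …, t`. -/
def totalCost (C : ℕ → ℝ) (t : ℕ) : ℝ := ∑ s ∈ Icc 1 t, C s

section TotalCost

variable {C : ℕ → ℝ}

theorem totalCost_succ (t : ℕ) : totalCost C (t + 1) = totalCost C t + C (t + 1) :=
  sum_Icc_succ_top (Nat.le_add_left 1 t) C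

theorem totalCost_mono (hC : ∀ t, 1 ≤ t → 0 ≤ C t) : Monotone (totalCost C) :=
  monotone_nat_of_le_succ fun t ↦ by
    rw [totalCost_succ]
    exact le_add_of_nonneg_right (hC (t + 1) (Nat.le_add_left 1 t))

theorem mul_le_totalCost {ℓ : ℝ} (hC : ∀ t, 1 ≤ t → ℓ ≤ C t) (t : ℕ) : ℓ * t ≤ totalCost C t := by
  have := card_nsmul_le_sum (Icc 1 t) C ℓ fun s hs ↦ hC s (mem_Icc.1 hs).1
  rwa [Nat.card_Icc, Nat.add_sub_cancel, nsmul_eq_mul, mul_comm] at this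

theorem tendsto_totalCost_atTop {ℓ : ℝ} (hℓ : 0 < ℓ) (hC : ∀ t, 1 ≤ t → ℓ ≤ C t) :
    Tendsto (totalCost C) atTop atTop :=
  tendsto_atTop_mono (mul_le_totalCost hC) (tendsto_natCast_atTop_atTop.const_mul_atTop hℓ)

theorem isBigO_natCast_totalCost {ℓ : ℝ} (hℓ : 0 < ℓ) (hC : ∀ t, 1 ≤ t → ℓ ≤ C t) :
    (fun t : ℕ ↦ (t : ℝ)) =O[atTop] totalCost C := by
  refine IsBigO.of_bound ℓ⁻¹ (.of_forall fun t ↦ ?_)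
  rw [Real.norm_natCast, ← div_eq_inv_mul, le_div_iff₀' hℓ]
  exact (mul_le_totalCost hC t).trans (Real.le_norm_self _)

end TotalCost

section Tracking

variable {ι : Type*} [DecidableEq ι]

/-- The number `N_b(t)` of pulls of arm `b` in rounds `1, …, t`. -/
def pullCount (pull : ℕ → ι) (b : ι) (t : ℕ) : ℕ := #{s ∈ Icc 1 t | pull s = b}

/-- The cost spent on arm `b` in rounds `1, …, t`. This is `ĉ_b(t) N_b(t)`, written without the
empirical mean `ĉ_b(t)` so that it is also meaningful for an arm that has not been pulled yet. -/
def armCost (pull : ℕ → ι) (C : ℕ → ℝ) (b : ι) (t : ℕ) : ℝ :=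
  ∑ s ∈ Icc 1 t with pull s = b, C s

/-- The amount `J(t) w_b - ĉ_b(t) N_b(t)` by which the cost spent on arm `b` falls short of the
share `w_b` of the total cost. -/
def costDeficit (pull : ℕ → ι) (C : ℕ → ℝ) (w : ι → ℝ) (b : ι) (t : ℕ) : ℝ :=
  totalCost C t * w b - armCost pull C b t

/-- The tracking rule at time `t`: the next arm has been pulled at most `r` times (forced
exploration), or it has the largest cost deficit with respect to the target proportions `w`. -/
def IsTrackingStep (pull : ℕ → ι) (C : ℕ → ℝ) (w : ι → ℝ) (r : ℝ) (t : ℕ) : Prop :=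
  pullCount pull (pull (t + 1)) t ≤ r ∨
    ∀ b, costDeficit pull C w b t ≤ costDeficit pull C w (pull (t + 1)) t

variable {pull : ℕ → ι} {C : ℕ → ℝ}

theorem armCost_div_pullCount_mul_pullCount (b : ι) (t : ℕ) :
    armCost pull C b t / pullCount pull b t * pullCount pull b t = armCost pull C b t := by
  refine div_mul_cancel_of_imp fun hcount ↦ ?_
  rw [armCost, card_eq_zero.1 (Nat.cast_eq_zero.1 hcount), sum_empty]

theorem armCost_succ_of_eq {b : ι} {t : ℕ} (hb : pull (t + 1) = b) :
    armCost pull C b (t + 1) = armCost pull C b t + C (t + 1) := by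
  simp only [armCost, sum_filter, sum_Icc_succ_top (Nat.le_add_left 1 t), if_pos hb]

theorem armCost_succ_of_ne {b : ι} {t : ℕ} (hb : pull (t + 1) ≠ b) :
    armCost pull C b (t + 1) = armCost pull C b t := by
  simp only [armCost, sum_filter, sum_Icc_succ_top (Nat.le_add_left 1 t), if_neg hb, add_zero]

theorem armCost_le_pullCount (hC : ∀ t, 1 ≤ t → C t ≤ 1) (b : ι) (t : ℕ) :
    armCost pull C b t ≤ pullCount pull b t := by
  have := sum_le_card_nsmul {s ∈ Icc 1 t | pull s = b} C 1
    fun s hs ↦ hC s (mem_Icc.1 (mem_filter.1 hs).1).1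
  rwa [nsmul_one] at this

variable [Fintype ι]

theorem sum_armCost (t : ℕ) : ∑ b, armCost pull C b t = totalCost C t :=
  sum_fiberwise (Icc 1 t) pull C

theorem sum_costDeficit {w : ι → ℝ} (hw : ∑ b, w b = 1) (t : ℕ) :
    ∑ b, costDeficit pull C w b t = 0 := by
  simp only [costDeficit, sum_sub_distrib, ← mul_sum, hw, sum_armCost, mul_one, sub_self]

theorem IsTrackingStep.armCost_le {w : ι → ℝ} {r : ℝ} {t : ℕ}
    (hstep : IsTrackingStep pull C w r t) (hC : ∀ t, 1 ≤ t → C t ≤ 1) (hw : ∑ b, w b = 1) :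
    armCost pull C (pull (t + 1)) t ≤ max r (totalCost C t * w (pull (t + 1))) := by
  rcases hstep with hexplore | hmax
  · exact le_max_of_le_left ((armCost_le_pullCount hC _ t).trans hexplore)
  · have deficit_nonneg : 0 ≤ costDeficit pull C w (pull (t + 1)) t :=
      nonneg_of_forall_le_of_sum_eq_zero (x := (costDeficit pull C w · t)) hmax
        (sum_costDeficit hw t)
    exact le_max_of_le_right (sub_nonneg.1 deficit_nonneg)

theorem IsTrackingStep.armCost_succ_le {w : ι → ℝ} {r B : ℝ} {t : ℕ} {b : ι}
    (hstep : IsTrackingStep pull C w r t) (hC : ∀ t, 1 ≤ t → C t ≤ 1) (hw : ∑ b, w b = 1)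
    (hr : r ≤ B) (hB : totalCost C t * w b ≤ B) :
    armCost pull C b (t + 1) ≤ max (armCost pull C b t) (B + 1) := by
  by_cases hb : pull (t + 1) = b
  · have spent_le : armCost pull C b t ≤ B := by
      subst hb
      exact (hstep.armCost_le hC hw).trans (max_le hr hB)
    rw [armCost_succ_of_eq hb]
    exact le_max_of_le_right (add_le_add spent_le (hC _ (Nat.le_add_left 1 t)))
  · exact le_max_of_le_left (armCost_succ_of_ne hb).le

variable {what : ℕ → ι → ℝ} {wstar : ι → ℝ} {r : ℕ → ℝ} {ε η : ℝ}

theorem eventually_armCost_le (hC : ∀ t, 1 ≤ t → C t ∈ Set.Icc 0 1)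
    (hJ : Tendsto (totalCost C) atTop atTop) (hr : r =o[atTop] totalCost C)
    (hwhat : ∀ᶠ t in atTop, ∑ b, what t b = 1)
    (htrack : ∀ᶠ t in atTop, IsTrackingStep pull C (what t) (r t) t) (hε : 0 < ε) {b : ι}
    (hwstar : 0 ≤ wstar b) (hclose : ∀ᶠ t in atTop, what t b ≤ wstar b + ε) :
    ∀ᶠ t in atTop, armCost pull C b t ≤ totalCost C t * (wstar b + ε) + 1 := by
  have hpos : 0 < wstar b + ε := by positivity
  refine eventually_le_of_succ_le_max ?_ ?_ ?_
  · exact ((totalCost_mono fun t ht ↦ (hC t ht).1).mul_const hpos.le).add_const 1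
  · exact tendsto_atTop_add_const_right _ _ (hJ.atTop_mul_const hpos)
  · filter_upwards [hwhat, htrack, hclose, hr.bound hε, hJ.eventually_ge_atTop 0]
      with t hsum hstep hle hrt hJt
    refine hstep.armCost_succ_le (fun s hs ↦ (hC s hs).2) hsum ?_ (by gcongr)
    calc r t ≤ ε * totalCost C t := by
          rw [Real.norm_of_nonneg hJt] at hrt
          exact (Real.le_norm_self _).trans hrt
      _ ≤ totalCost C t * (wstar b + ε) := by
          rw [mul_comm]
          gcongr
          exact le_add_of_nonneg_left hwstar

theorem tracking_lemma_general (hC : ∀ t, 1 ≤ t → C t ∈ Set.Icc 0 1)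
    (hJ : Tendsto (totalCost C) atTop atTop) (hr : r =o[atTop] totalCost C)
    (hwhat : ∀ᶠ t in atTop, ∑ b, what t b = 1)
    (hwstar : ∀ b, 0 ≤ wstar b) (hwstar_sum : ∑ b, wstar b = 1)
    (htrack : ∀ᶠ t in atTop, IsTrackingStep pull C (what t) (r t) t)
    (hε : 0 < ε) (hclose : ∀ᶠ t in atTop, ∀ b, |what t b - wstar b| ≤ ε) (hη : ε < η) :
    ∀ᶠ t in atTop, ∀ b,
      |armCost pull C b t / totalCost C t - wstar b| ≤ (Fintype.card ι - 1) * η := by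
  have armCost_le : ∀ᶠ t in atTop, ∀ b,
      armCost pull C b t ≤ totalCost C t * (wstar b + ε) + 1 :=
    eventually_all.2 fun b ↦ eventually_armCost_le hC hJ hr hwhat htrack hε (hwstar b) <|
      hclose.mono fun t ht ↦ sub_le_iff_le_add'.1 (abs_le.1 (ht b)).2
  have one_le : ∀ᶠ t in atTop, 1 ≤ totalCost C t * (η - ε) :=
    (hJ.atTop_mul_const (sub_pos.2 hη)).eventually_ge_atTop 1
  filter_upwards [armCost_le, one_le, hJ.eventually_gt_atTop 0] with t hspent hone hJt
  refine abs_le_card_sub_one_mul_of_sum_eq_zero (hε.trans hη).le (fun b ↦ ?_) ?_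
  · rw [sub_le_iff_le_add', div_le_iff₀' hJt]
    linarith [hspent b]
  · rw [sum_sub_distrib, ← sum_div, sum_armCost, div_self hJt.ne', hwstar_sum, sub_self]

end Tracking

end

/-- Lemma 16: the largest-deficit-first tracking rule keeps
the empirical cost proportions within `3(K−1)ε` of `w*` once the plug-in
proportions are within `ε`. At each round `t ≥ K`, the pulled arm
`a_{t+1}` either satisfies `N_{a_{t+1}}(t) ≤ √t` (forced exploration) or
maximizes the cost deficit `J(t)·ŵ*_a(t) − ĉ_a(t)·N_a(t)`. Costs lie in
`[ℓ,1]`. -/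
theorem tracking_lemma
    (K : ℕ) (hK : 2 ≤ K) (ℓ : ℝ) (hℓ : ℓ ∈ Set.Ioc (0 : ℝ) 1) (ε : ℝ) (hε : 0 < ε)
    (pull : ℕ → Fin K) (C : ℕ → ℝ)
    (hC : ∀ t : ℕ, 1 ≤ t → C t ∈ Set.Icc ℓ 1)
    (what : ℕ → Fin K → ℝ) (wstar : Fin K → ℝ) (t₀ : ℕ) :
    let N : Fin K → ℕ → ℕ := fun b t => ((Finset.Icc 1 t).filter fun s => pull s = b).card
    let chat : Fin K → ℕ → ℝ := fun b t =>
      (∑ s ∈ (Finset.Icc 1 t).filter fun s => pull s = b, C s) / (N b t : ℝ)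
    let J : ℕ → ℝ := fun t => ∑ s ∈ Finset.Icc 1 t, C s
    (∀ b : Fin K, pull (b.val + 1) = b) →
    (∀ t : ℕ, K ≤ t → (∀ b, 0 ≤ what t b) ∧ ∑ b, what t b = 1) →
    ((∀ b, 0 ≤ wstar b) ∧ ∑ b, wstar b = 1) →
    (∀ t : ℕ, K ≤ t →
      ((N (pull (t + 1)) t : ℝ) ≤ Real.sqrt t ∨
        ∀ b : Fin K, J t * what t b - chat b t * (N b t : ℝ) ≤
          J t * what t (pull (t + 1)) - chat (pull (t + 1)) t * (N (pull (t + 1)) t : ℝ))) →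
    (∀ t : ℕ, t₀ ≤ t → ∀ b : Fin K, |what t b - wstar b| < ε) →
    ∃ tε : ℕ, t₀ ≤ tε ∧ ∀ t : ℕ, tε ≤ t → ∀ b : Fin K,
      |chat b t * (N b t : ℝ) / J t - wstar b| ≤ 3 * ((K : ℝ) - 1) * ε := by
  intro N chat J _ hwhat hwstar htrack hclose
  have chat_mul_N : ∀ b t, chat b t * (N b t : ℝ) = armCost pull C b t :=
    armCost_div_pullCount_mul_pullCount
  simp only [chat_mul_N] at htrack ⊢
  have hC_lower : ∀ t, 1 ≤ t → ℓ ≤ C t := fun t ht ↦ (hC t ht).1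
  have sqrt_isLittleO : (fun t : ℕ ↦ √(t : ℝ)) =o[Filter.atTop] totalCost C :=
    (isLittleO_sqrt_id_atTop.comp_tendsto tendsto_natCast_atTop_atTop).trans_isBigO
      (isBigO_natCast_totalCost hℓ.1 hC_lower)
  have tracking := tracking_lemma_general (η := 3 * ε)
    (fun t ht ↦ ⟨hℓ.1.le.trans (hC t ht).1, (hC t ht).2⟩)
    (tendsto_totalCost_atTop hℓ.1 hC_lower) sqrt_isLittleO
    (Filter.eventually_atTop.2 ⟨K, fun t ht ↦ (hwhat t ht).2⟩) hwstar.1 hwstar.2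
    (Filter.eventually_atTop.2 ⟨K, htrack⟩) hε
    (Filter.eventually_atTop.2 ⟨t₀, fun t ht b ↦ (hclose t ht b).le⟩) (by linarith)
  obtain ⟨T, hT⟩ := Filter.eventually_atTop.1 tracking
  refine ⟨max t₀ T, le_max_left _ _, fun t ht b ↦ ?_⟩
  have hbound := hT t (le_of_max_le_right ht) b
  rwa [Fintype.card_fin, mul_left_comm, ← mul_assoc] at hbound
end
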